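/- Let s1 > s2 > s3 ≥ 2 be pairwise coprime positive integers, let S be the numerical semigroup generated by n1 = s2*s3, n2 = s1*s3, n3 = s1*s2, and set δ1 = s1 − s2, δ2 = s2 − s3. Then for every d ∈ Euc(δ1,δ2) there exist s ∈ S and factorizations z, z' ∈ Z(s) with d = ℓ(z) − ℓ(z') and such that every factorization z'' ∈ Z(s) satisfies either ℓ(z'') ≤ ℓ(z') or ℓ(z'') ≥ ℓ(z). -/

import Mathlib

/-- Membership in the numerical semigroup generated by `n1, n2, n3`. -/
def memS (n1 n2 n3 s : ℕ) : Prop :=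
  ∃ a1 a2 a3 : ℕ, a1 * n1 + a2 * n2 + a3 * n3 = s

/-- The set of factorizations of `s` with respect to the generators `n1, n2, n3`. -/
def Zset (n1 n2 n3 s : ℕ) : Set (ℕ × ℕ × ℕ) :=
  {z | z.1 * n1 + z.2.1 * n2 + z.2.2 * n3 = s}

/-- Length of a factorization. -/
def len (z : ℕ × ℕ × ℕ) : ℕ := z.1 + z.2.1 + z.2.2

/-- The set of lengths of factorizations of `s`. -/
def Lset (n1 n2 n3 s : ℕ) : Set ℕ := len '' Zset n1 n2 n3 s

/-- The Delta set of an element `s`: differences of consecutive lengths. -/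
def DeltaOf (n1 n2 n3 s : ℕ) : Set ℕ :=
  {d | ∃ l l' : ℕ, l ∈ Lset n1 n2 n3 s ∧ l' ∈ Lset n1 n2 n3 s ∧ l' < l ∧ d = l - l' ∧
      ∀ t ∈ Lset n1 n2 n3 s, ¬ (l' < t ∧ t < l)}

/-- The Delta set of the numerical semigroup generated by `n1, n2, n3`. -/
def DeltaS (n1 n2 n3 : ℕ) : Set ℕ :=
  {d | ∃ s : ℕ, memS n1 n2 n3 s ∧ d ∈ DeltaOf n1 n2 n3 s}


/-- The sequence of remainders of the (slow) Euclidean algorithm: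
`etaSeq a b 0 = a`, `etaSeq a b 1 = b`, `etaSeq a b (n+2) = etaSeq a b n % etaSeq a b (n+1)`.
(0-indexed: `etaSeq a b (j-1)` is the paper's `η_j` for `a = η₁`, `b = η₂`.) -/
def etaSeq (a b : ℕ) : ℕ → ℕ
  | 0 => a
  | 1 => b
  | n + 2 => etaSeq a b n % etaSeq a b (n + 1)

/-- `Dset u v lo = {u - q*v : lo ≤ q ≤ ⌊u/v⌋}`. -/
def Dset (u v lo : ℕ) : Set ℕ :=
  {x | ∃ q : ℕ, lo ≤ q ∧ q ≤ u / v ∧ x = u - q * v}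

/-- Euclid's set of `δ1` and `δ2`: the union of the sets `D(η_j, η_{j+1})` over all `j`
with `η_{j+1} > 0`, where `q` starts from `0` for the first two levels and from `1`
afterwards. -/
def Euc (δ1 δ2 : ℕ) : Set ℕ :=
  {x | ∃ j : ℕ, 0 < etaSeq (max δ1 δ2) (min δ1 δ2) (j + 1) ∧
      x ∈ Dset (etaSeq (max δ1 δ2) (min δ1 δ2) j)
            (etaSeq (max δ1 δ2) (min δ1 δ2) (j + 1)) (if j ≤ 1 then 0 else 1)}

def RPair (a b d e : ℤ) : Prop :=
  ∃ u v u' v' : ℤ, 0 ≤ u ∧ 0 ≤ v ∧ 0 ≤ u' ∧ 0 ≤ v' ∧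
    ((u * v' - v * u' = 1 ∧ d = u * a - v * b ∧ e = v' * b - u' * a) ∨
     (u * v' - v * u' = -1 ∧ d = v * b - u * a ∧ e = u' * a - v' * b))

lemma RPair.start (a b : ℤ) : RPair a b a b :=
  ⟨1, 0, 0, 1, by norm_num, by norm_num, by norm_num, by norm_num, Or.inl (by norm_num)⟩

lemma RPair.swap {a b d e : ℤ} (h : RPair a b d e) : RPair a b e d := by
  obtain ⟨u, v, u', v', h1, h2, h3, h4, h | h⟩ := h
  · exact ⟨u', v', u, v, h3, h4, h1, h2, Or.inr ⟨by linarith [h.1], h.2.2, h.2.1⟩⟩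
  · exact ⟨u', v', u, v, h3, h4, h1, h2, Or.inl ⟨by linarith [h.1], h.2.2, h.2.1⟩⟩

lemma RPair.sub {a b d e : ℤ} (h : RPair a b d e) (q : ℕ) : RPair a b (d - q * e) e := by
  obtain ⟨u, v, u', v', h1, h2, h3, h4, h | h⟩ := h
  · refine ⟨u + q * u', v + q * v', u', v', by positivity, by positivity, h3, h4, Or.inl ⟨?_, ?_, h.2.2⟩⟩
    · linear_combination h.1
    · rw [h.2.1, h.2.2]; ring
  · refine ⟨u + q * u', v + q * v', u', v', by positivity, by positivity, h3, h4, Or.inr ⟨?_, ?_, h.2.2⟩⟩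
    · linear_combination h.1
    · rw [h.2.1, h.2.2]; ring

lemma RPair.eta {a b : ℤ} {m n : ℕ} (h : RPair a b m n) (j : ℕ) :
    RPair a b (etaSeq m n j) (etaSeq m n (j + 1)) := by
  induction j with
  | zero => simpa [etaSeq] using h
  | succ j ih =>
    have := (ih.sub (etaSeq m n j / etaSeq m n (j + 1))).swap
    have e : ((etaSeq m n (j + 2) : ℕ) : ℤ) = (etaSeq m n j : ℤ) -
        ((etaSeq m n j / etaSeq m n (j + 1) : ℕ) : ℤ) * (etaSeq m n (j + 1) : ℤ) := by
      rw [etaSeq]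
      have := Nat.mod_add_div (etaSeq m n j) (etaSeq m n (j + 1))
      have h2 : ((etaSeq m n j % etaSeq m n (j + 1) : ℕ) : ℤ) + (etaSeq m n (j + 1) : ℤ) *
        ((etaSeq m n j / etaSeq m n (j + 1) : ℕ) : ℤ) = (etaSeq m n j : ℤ) := by exact_mod_cast this
      linarith
    rw [e]
    exact this

/-- No combination of small weight has value strictly between `0` and `d`. -/
lemma no_between {u v u' v' d e x y α β : ℤ} (hu : 0 ≤ u) (hv : 0 ≤ v) (hu' : 0 ≤ u')
    (hv' : 0 ≤ v') (hn : u' + v' ≠ 0) (hd : 0 ≤ d) (he : 0 ≤ e) (hx : 0 ≤ x) (hy : 0 ≤ y)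
    (ex : x = α * u + β * u') (ey : y = α * v + β * v')
    (h0 : 0 < α * d - β * e) (h1 : α * d - β * e < d) (hw : x + y ≤ u + v) : False := by
  rcases le_or_gt α 0 with ha | ha
  · have hb : β < 0 := by
      by_contra hb
      push Not at hb
      nlinarith [mul_nonneg hb he, mul_nonneg (neg_nonneg.2 ha) hd]
    have t1 : β * (u' + v') < 0 := mul_neg_of_neg_of_pos hb (by omega)
    have t2 : α * (u + v) ≤ 0 := mul_nonpos_of_nonpos_of_nonneg ha (by omega)
    nlinarith
  · have hb : 0 < β := by
      by_contra hb
      push Not at hb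
      nlinarith [mul_nonneg (neg_nonneg.2 hb) he, mul_nonneg (show 0 ≤ α - 1 by omega) hd]
    have t1 : 0 < β * (u' + v') := mul_pos hb (by omega)
    have t2 : 0 ≤ (α - 1) * (u + v) := mul_nonneg (by omega) (by omega)
    nlinarith

lemma gap_pos {a b d e u v u' v' x y : ℤ} (hu : 0 ≤ u) (hv : 0 ≤ v) (hu' : 0 ≤ u')
    (hv' : 0 ≤ v') (hdet : u * v' - v * u' = 1) (hd : d = u * a - v * b)
    (hE : e = v' * b - u' * a) (d0 : 0 ≤ d) (e0 : 0 ≤ e) (hx : 0 ≤ x) (hy : 0 ≤ y)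
    (hw : x + y ≤ u + v) (h0 : 0 < x * a - y * b) (h1 : x * a - y * b < d) : False := by
  have hn : u' + v' ≠ 0 := by
    intro h
    have h1 : u' = 0 := by omega
    have h2 : v' = 0 := by omega
    simp [h1, h2] at hdet
  have ev : (x * v' - y * u') * d - (u * y - v * x) * e = x * a - y * b := by
    rw [hd, hE]; linear_combination (x * a - y * b) * hdet
  refine no_between (α := x * v' - y * u') (β := u * y - v * x) hu hv hu' hv' hn d0 e0 hx hy
    ?_ ?_ (by rw [ev]; exact h0) (by rw [ev]; exact h1) hw
  · linear_combination (-x) * hdet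
  · linear_combination (-y) * hdet

lemma fact_form {s1 s2 s3 k : ℕ} (p1 : 0 < s1) (p2 : 0 < s2) (p3 : 0 < s3)
    (c12 : Nat.Coprime s1 s2) (c13 : Nat.Coprime s1 s3) (c23 : Nat.Coprime s2 s3)
    {z : ℕ × ℕ × ℕ} (hz : z ∈ Zset (s2 * s3) (s1 * s3) (s1 * s2) (k * (s1 * s2 * s3))) :
    ∃ x y : ℕ, x + y ≤ k ∧
      (len z : ℤ) = k * s2 + (x * ((s1 : ℤ) - s2) - y * ((s2 : ℤ) - s3)) := by
  obtain ⟨a1, a2, a3⟩ := z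
  simp only [Zset, Set.mem_setOf_eq] at hz
  have d1 : s1 ∣ a1 := by
    refine (Nat.Coprime.mul_right c12 c13).dvd_of_dvd_mul_right ?_
    have : s1 ∣ a1 * (s2 * s3) + s1 * (a2 * s3 + a3 * s2) := ⟨k * (s2 * s3), by linarith⟩
    exact (Nat.dvd_add_left (Dvd.intro _ rfl)).1 this
  have d2 : s2 ∣ a2 := by
    refine (Nat.Coprime.mul_right c12.symm c23).dvd_of_dvd_mul_right ?_
    have : s2 ∣ a2 * (s1 * s3) + s2 * (a1 * s3 + a3 * s1) := ⟨k * (s1 * s3), by linarith⟩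
    exact (Nat.dvd_add_left (Dvd.intro _ rfl)).1 this
  have d3 : s3 ∣ a3 := by
    refine (Nat.Coprime.mul_right c13.symm c23.symm).dvd_of_dvd_mul_right ?_
    have : s3 ∣ a3 * (s1 * s2) + s3 * (a1 * s2 + a2 * s1) := ⟨k * (s1 * s2), by linarith⟩
    exact (Nat.dvd_add_left (Dvd.intro _ rfl)).1 this
  obtain ⟨x, rfl⟩ := d1
  obtain ⟨w, rfl⟩ := d2
  obtain ⟨y, rfl⟩ := d3
  have hk : x + w + y = k := by
    have : (x + w + y) * (s1 * s2 * s3) = k * (s1 * s2 * s3) := by rw [← hz]; ring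
    exact Nat.eq_of_mul_eq_mul_right (by positivity) this
  refine ⟨x, y, by omega, ?_⟩
  subst hk
  simp only [len]
  push_cast
  ring

lemma gap_of_RPair {s1 s2 s3 : ℕ} (p1 : 0 < s1) (p2 : 0 < s2) (p3 : 0 < s3)
    (c12 : Nat.Coprime s1 s2) (c13 : Nat.Coprime s1 s3) (c23 : Nat.Coprime s2 s3) (d e : ℕ)
    (h : RPair ((s1 : ℤ) - s2) ((s2 : ℤ) - s3) d e) :
      ∃ s : ℕ, memS (s2 * s3) (s1 * s3) (s1 * s2) s ∧
        ∃ z ∈ Zset (s2 * s3) (s1 * s3) (s1 * s2) s,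
          ∃ z' ∈ Zset (s2 * s3) (s1 * s3) (s1 * s2) s,
            (d : ℤ) = (len z : ℤ) - (len z' : ℤ) ∧
            ∀ z'' ∈ Zset (s2 * s3) (s1 * s3) (s1 * s2) s,
              len z'' ≤ len z' ∨ len z ≤ len z'' := by
  obtain ⟨u, v, u', v', hu, hv, hu', hv', h⟩ := h
  lift u to ℕ using hu
  lift v to ℕ using hv
  have m1 : (u * s1, 0, v * s3) ∈ Zset (s2 * s3) (s1 * s3) (s1 * s2)
      ((u + v) * (s1 * s2 * s3)) := by
    simp only [Zset, Set.mem_setOf_eq]; ring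
  have m2 : (0, (u + v) * s2, 0) ∈ Zset (s2 * s3) (s1 * s3) (s1 * s2)
      ((u + v) * (s1 * s2 * s3)) := by
    simp only [Zset, Set.mem_setOf_eq]; ring
  have l1 : (len (u * s1, 0, v * s3) : ℤ) = u * s1 + v * s3 := by simp [len]
  have l2 : (len (0, (u + v) * s2, 0) : ℤ) = (u + v) * s2 := by simp [len]
  refine ⟨(u + v) * (s1 * s2 * s3), ⟨_, _, _, m1⟩, ?_⟩
  rcases h with ⟨hdet, hd, hE⟩ | ⟨hdet, hd, hE⟩
  · refine ⟨_, m1, _, m2, by rw [l1, l2, hd]; ring, ?_⟩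
    intro z hz
    obtain ⟨x, y, hxy, hl⟩ := fact_form p1 p2 p3 c12 c13 c23 hz
    push_cast at hl
    by_contra hc
    push Not at hc
    obtain ⟨g1, g2⟩ := hc
    zify at g1 g2
    rw [l2, hl] at g1
    rw [l1, hl] at g2
    exact gap_pos (x := x) (y := y) (Int.natCast_nonneg u) (Int.natCast_nonneg v) hu' hv' hdet hd hE
      (by positivity) (by positivity) (by positivity) (by positivity) (by exact_mod_cast hxy)
      (by linarith) (by linarith)
  · refine ⟨_, m2, _, m1, by rw [l1, l2, hd]; ring, ?_⟩
    intro z hz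
    obtain ⟨x, y, hxy, hl⟩ := fact_form p1 p2 p3 c12 c13 c23 hz
    push_cast at hl
    by_contra hc
    push Not at hc
    obtain ⟨g1, g2⟩ := hc
    zify at g1 g2
    rw [l1, hl] at g1
    rw [l2, hl] at g2
    exact gap_pos (x := y) (y := x) (u := v) (v := u) (u' := v') (v' := u')
      (Int.natCast_nonneg v) (Int.natCast_nonneg u) hv' hu' (by linarith) hd hE
      (by positivity) (by positivity) (by positivity) (by positivity)
      (by have : (x : ℤ) + y ≤ u + v := by exact_mod_cast hxy
          linarith)
      (by linarith) (by linarith)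

/-- Every element of the Euclid set is realized as a gap between consecutive lengths of
factorizations of some element of the semigroup. -/
theorem euclid_realized_as_gap (s1 s2 s3 : ℕ) (h3 : 2 ≤ s3) (h32 : s3 < s2) (h21 : s2 < s1)
    (c12 : Nat.Coprime s1 s2) (c13 : Nat.Coprime s1 s3) (c23 : Nat.Coprime s2 s3) :
    ∀ d ∈ Euc (s1 - s2) (s2 - s3),
      ∃ s : ℕ, memS (s2 * s3) (s1 * s3) (s1 * s2) s ∧
        ∃ z ∈ Zset (s2 * s3) (s1 * s3) (s1 * s2) s,
          ∃ z' ∈ Zset (s2 * s3) (s1 * s3) (s1 * s2) s,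
            (d : ℤ) = (len z : ℤ) - (len z' : ℤ) ∧
            ∀ z'' ∈ Zset (s2 * s3) (s1 * s3) (s1 * s2) s,
              len z'' ≤ len z' ∨ len z ≤ len z'' := by
  rintro d ⟨j, hj, q, -, hq, rfl⟩
  have hst : RPair ((s1 : ℤ) - s2) ((s2 : ℤ) - s3)
      ((max (s1 - s2) (s2 - s3) : ℕ) : ℤ) ((min (s1 - s2) (s2 - s3) : ℕ) : ℤ) := by
    have e1 : (s1 : ℤ) - s2 = ((s1 - s2 : ℕ) : ℤ) := by omega
    have e2 : (s2 : ℤ) - s3 = ((s2 - s3 : ℕ) : ℤ) := by omega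
    rw [e1, e2]
    rcases le_total (s1 - s2) (s2 - s3) with h | h
    · rw [max_eq_right h, min_eq_left h]; exact (RPair.start _ _).swap
    · rw [max_eq_left h, min_eq_right h]; exact RPair.start _ _
  have h := (hst.eta j).sub q
  have hle := (Nat.le_div_iff_mul_le hj).1 hq
  refine gap_of_RPair (by omega) (by omega) (by omega) c12 c13 c23 _
    (etaSeq (max (s1 - s2) (s2 - s3)) (min (s1 - s2) (s2 - s3)) (j + 1)) ?_
  rw [Nat.cast_sub hle, Nat.cast_mul]
  exact h
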